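/- arXiv:1810.04054 — 2 statements merged into one kernel-verified Lean document; each statement's English description precedes it below -/
import Mathlib

section
/- Let α > 0 be a non-integer real number, let d > 0 and x > 0. Then lim_{t → 0⁺} t^{α/2} M(−α/2, 1/2, −x²/(4 d t)) = (√π / Γ(α/2 + 1/2)) · x^α / (2^α d^{α/2}). -/
noncomputable def poch (a : ℝ) (s : ℕ) : ℝ := ∏ i ∈ Finset.range s, (a + i)

/-- Kummer's confluent hypergeometric function `M(a,b,z)`,
defined by the everywhere-convergent series `M(a,b,z) = Σ_{s} (a)_s z^s / ((b)_s s!)`. -/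
noncomputable def kummerM (a b z : ℝ) : ℝ :=
  ∑' s : ℕ, poch a s / (poch b s * (Nat.factorial s)) * z ^ s

/-- Tricomi's confluent hypergeometric function
`U(a,b,z) = (1/Γ(a)) ∫_0^∞ e^{−z t} t^{a−1} (1+t)^{b−a−1} dt`. -/
noncomputable def tricomiU (a b z : ℝ) : ℝ :=
  (1 / Real.Gamma a) *
    ∫ t in Set.Ioi (0:ℝ), Real.exp (-z * t) * t ^ (a - 1) * (1 + t) ^ (b - a - 1)

lemma poch_ne (b : ℝ) (hb : ∀ k : ℕ, b + k ≠ 0) (n : ℕ) : poch b n ≠ 0 :=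
  Finset.prod_ne_zero_iff.mpr fun k _ => hb k

lemma poch_succ (b : ℝ) (n : ℕ) : poch b (n+1) = poch b n * (b + n) := by
  simp [poch, Finset.prod_range_succ]

lemma poch_succ' (b : ℝ) (n : ℕ) : poch b (n+1) = b * poch (b+1) n := by
  unfold poch
  rw [Finset.prod_range_succ', mul_comm]
  congr 1
  · simp
  · refine Finset.prod_congr rfl fun i _ => ?_
    push_cast; ring

lemma vander (n : ℕ) : ∀ a b : ℝ, (∀ k : ℕ, b + k ≠ 0) →
    ∑ k ∈ Finset.range (n+1), (n.choose k : ℝ) * ((-1)^k * (poch a k / poch b k))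
      = poch (b-a) n / poch b n := by
  induction n with
  | zero => intro a b hb; simp [poch]
  | succ n ih =>
    intro a b hb
    have hb1 : ∀ k : ℕ, (b+1) + k ≠ 0 := fun k => by
      have := hb (k+1); push_cast at this; intro h; apply this; linarith
    have h := Finset.sum_choose_succ_mul (fun i _ => ((-1:ℝ)^i * (poch a i / poch b i))) n
    rw [h, ih a b hb]
    have h2 : ∑ i ∈ Finset.range (n+1), (n.choose i : ℝ) * ((-1)^(i+1) * (poch a (i+1) / poch b (i+1)))
        = -(a/b) * (poch (b-a) n / poch (b+1) n) := by
      have := ih (a+1) (b+1) hb1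
      rw [show b + 1 - (a+1) = b - a by ring] at this
      rw [← this, Finset.mul_sum]
      refine Finset.sum_congr rfl fun i _ => ?_
      rw [poch_succ', poch_succ', mul_div_mul_comm]; ring
    rw [h2]
    have e1 := poch_succ b n
    have e2 := poch_succ' b n
    have n1 := poch_ne b hb n
    have n2 := poch_ne (b+1) hb1 n
    have n3 : b ≠ 0 := by simpa using hb 0
    have n4 := hb n
    have e3 : poch (b+1) n = poch b n * (b+n) / b := by
      rw [← e1, e2]; field_simp
    rw [e3, e1, poch_succ]
    field_simp
    ring

lemma kummer_summable (a b z : ℝ) (ha : ∀ k : ℕ, a + k ≠ 0) (hb : ∀ k : ℕ, b + k ≠ 0)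
    (hz : z ≠ 0) :
    Summable fun s : ℕ => ‖poch a s / (poch b s * (Nat.factorial s)) * z ^ s‖ := by
  have hne : ∀ n : ℕ, poch a n / (poch b n * (Nat.factorial n)) * z ^ n ≠ 0 := by
    intro n
    have := poch_ne a ha n
    have := poch_ne b hb n
    have := n.factorial_ne_zero
    positivity
  refine Summable.norm ?_
  refine summable_of_ratio_test_tendsto_lt_one (l := 0) one_pos (.of_forall hne) ?_
  have key : ∀ n : ℕ, poch a (n+1) / (poch b (n+1) * (Nat.factorial (n+1))) * z ^ (n+1) /
      (poch a n / (poch b n * (Nat.factorial n)) * z ^ n)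
      = (1 + (a - b) / (b + n)) * (z * (1 / ((n:ℝ) + 1))) := by
    intro n
    have h1 := poch_ne a ha n
    have h2 := poch_ne b hb n
    have h3 : (n.factorial : ℝ) ≠ 0 := by exact_mod_cast n.factorial_ne_zero
    have h4 : (n:ℝ) + 1 ≠ 0 := by positivity
    have h5 := hb n
    rw [poch_succ, poch_succ, Nat.factorial_succ]
    push_cast
    field_simp
    ring
  simp_rw [← norm_div, key]
  have t1 : Filter.Tendsto (fun n : ℕ => (a - b) / (b + n)) Filter.atTop (nhds 0) :=
    Filter.Tendsto.const_div_atTop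
      (Filter.tendsto_atTop_add_const_left _ b tendsto_natCast_atTop_atTop) _
  have t2 := (tendsto_one_div_add_atTop_nhds_zero_nat (𝕜 := ℝ)).const_mul z
  have := ((t1.const_add 1).mul t2).norm
  simpa using this

lemma kummer_transform (a b z : ℝ) (ha : ∀ k : ℕ, a + k ≠ 0) (hb : ∀ k : ℕ, b + k ≠ 0)
    (hz : z ≠ 0) : kummerM a b (-z) * Real.exp z = kummerM (b-a) b z := by
  have hE : HasSum (fun n : ℕ => z^n / (n.factorial : ℝ)) (Real.exp z) := by
    rw [Real.exp_eq_exp_ℝ]; exact NormedSpace.expSeries_div_hasSum_exp z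
  have hEn : Summable (fun n : ℕ => ‖z^n / (n.factorial : ℝ)‖) := hE.summable.norm
  unfold kummerM
  rw [← hE.tsum_eq, tsum_mul_tsum_eq_tsum_sum_range_of_summable_norm
    (kummer_summable a b (-z) ha hb (neg_ne_zero.mpr hz)) hEn]
  refine tsum_congr fun n => ?_
  have := vander n a b hb
  rw [← div_div, ← this, Finset.sum_div, Finset.sum_mul]
  refine Finset.sum_congr rfl fun k hk => ?_
  have hk' : k ≤ n := Nat.lt_succ_iff.mp (Finset.mem_range.mp hk)
  rw [Nat.cast_choose ℝ hk', neg_pow]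
  have h2 := poch_ne b hb k
  have h3 : (n.factorial : ℝ) ≠ 0 := by exact_mod_cast n.factorial_ne_zero
  have h4 : (k.factorial : ℝ) ≠ 0 := by exact_mod_cast k.factorial_ne_zero
  have h5 : ((n-k).factorial : ℝ) ≠ 0 := by exact_mod_cast (n-k).factorial_ne_zero
  have h6 : z^n = z^k * z^(n-k) := by rw [← pow_add]; congr 1; omega
  rw [h6]
  field_simp

lemma gamma_poch (c : ℝ) (hc : 0 < c) (s : ℕ) : Real.Gamma (c + s) = Real.Gamma c * poch c s := by
  induction s with
  | zero => simp [poch]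
  | succ n ih =>
    rw [poch_succ, ← mul_assoc, ← ih, Nat.cast_succ, ← add_assoc, Real.Gamma_add_one (by positivity)]
    ring

lemma poch_half (s : ℕ) : poch (1/2) s * s.factorial * 4^s = ((2*s).factorial : ℝ) := by
  induction s with
  | zero => simp [poch]
  | succ n ih =>
    rw [poch_succ, show 2*(n+1) = 2*n+1+1 by ring, Nat.factorial_succ, Nat.factorial_succ,
      Nat.factorial_succ]
    push_cast
    rw [← ih]
    ring

lemma kummer_integral (α w : ℝ) (hα : 0 < α) (hw : 0 < w) :
    kummerM ((α+1)/2) (1/2) (w^2) * Real.Gamma ((α+1)/2) =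
      ∫ v in Set.Ioi (0:ℝ), 2 * (v^α * Real.exp (-v^2) * Real.cosh (2*w*v)) := by
  have hc : 0 < (α+1)/2 := by linarith
  let F : ℕ → ℝ → ℝ := fun s v =>
    2 * ((2*w)^(2*s) / ((2*s).factorial : ℝ)) * (v^(α+2*s) * Real.exp (-v^(2:ℝ)))
  have hFi : ∀ s, ∫ v in Set.Ioi (0:ℝ), F s v =
      poch ((α+1)/2) s / (poch (1/2) s * (Nat.factorial s)) * (w^2) ^ s * Real.Gamma ((α+1)/2) := by
    intro s
    have h0 : (0:ℝ) ≤ s := s.cast_nonneg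
    simp only [F]
    rw [MeasureTheory.integral_const_mul, integral_rpow_mul_exp_neg_rpow two_pos (by linarith),
      show (α + 2*s + 1)/2 = (α+1)/2 + s by ring, gamma_poch _ hc, ← poch_half]
    have h2 := poch_ne (1/2) (fun k => by positivity) s
    have h3 : (s.factorial : ℝ) ≠ 0 := by exact_mod_cast s.factorial_ne_zero
    rw [mul_pow, pow_mul, pow_mul]
    norm_num only
    field_simp
  have hInt : ∀ s, MeasureTheory.Integrable (F s) (MeasureTheory.volume.restrict (Set.Ioi 0)) := by
    intro s
    have h0 : (0:ℝ) ≤ s := s.cast_nonneg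
    exact (integrableOn_rpow_mul_exp_neg_rpow (by linarith) two_pos).const_mul _
  have hnorm : ∀ s, ∫ v in Set.Ioi (0:ℝ), ‖F s v‖ = ∫ v in Set.Ioi (0:ℝ), F s v := by
    intro s
    refine MeasureTheory.setIntegral_congr_fun measurableSet_Ioi fun v hv => ?_
    have hv : 0 < v := hv
    have : 0 ≤ F s v := by simp only [F]; positivity
    exact Real.norm_of_nonneg this
  have hS : Summable fun s => ∫ v in Set.Ioi (0:ℝ), ‖F s v‖ := by
    simp_rw [hnorm, hFi]
    exact ((kummer_summable _ _ _ (fun k => by positivity) (fun k => by positivity)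
      (by positivity)).of_norm).mul_right _
  have h := MeasureTheory.hasSum_integral_of_summable_integral_norm hInt hS
  simp_rw [hFi] at h
  unfold kummerM
  rw [← tsum_mul_right, h.tsum_eq]
  refine MeasureTheory.setIntegral_congr_fun measurableSet_Ioi fun v hv => ?_
  have hv : 0 < v := hv
  have h1 := (Real.hasSum_cosh (2*w*v)).mul_left (2 * (v^α * Real.exp (-v^2)))
  have : HasSum (fun s => F s v) (2 * (v^α * Real.exp (-v^2)) * Real.cosh (2*w*v)) := by
    refine (congrArg (fun f : ℕ → ℝ => HasSum f (2 * (v^α * Real.exp (-v^2)) * Real.cosh (2*w*v)))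
      (funext fun s => ?_)).mpr h1
    simp only [F]
    rw [Real.rpow_two, Real.rpow_add hv, mul_pow, show (2*(s:ℝ)) = ((2*s : ℕ) : ℝ) by push_cast; ring,
      Real.rpow_natCast]
    ring
  rw [this.tsum_eq]; ring

lemma dom_bound (α w y : ℝ) (hα : 0 < α) (hw : 1 ≤ w) :
    ‖|1 + y/w|^α * Real.exp (-y^2)‖ ≤ Real.exp (α^2/2) * Real.exp (-(1/2) * y^2) := by
  rw [Real.norm_of_nonneg (by positivity)]
  have h1 : |1 + y/w| ≤ Real.exp |y| := by
    calc |1 + y/w| ≤ |1| + |y/w| := abs_add_le _ _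
      _ ≤ 1 + |y| := by
        rw [abs_one, abs_div, abs_of_pos (by linarith : 0 < w)]
        gcongr
        exact div_le_self (abs_nonneg _) hw
      _ ≤ Real.exp |y| := by linarith [Real.add_one_le_exp |y|]
  have h2 : |1 + y/w|^α ≤ Real.exp (|y| * α) := by
    rw [Real.exp_mul]
    exact Real.rpow_le_rpow (abs_nonneg _) h1 hα.le
  calc _ ≤ Real.exp (|y| * α) * Real.exp (-y^2) := by gcongr
    _ ≤ _ := by
      rw [← Real.exp_add, ← Real.exp_add]
      apply Real.exp_le_exp.mpr
      nlinarith [sq_nonneg (|y| - α), sq_abs y]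

lemma meas_H (α w : ℝ) (hα : 0 < α) : Continuous fun y : ℝ => |1 + y/w|^α * Real.exp (-y^2) := by
  refine Continuous.mul ?_ (by fun_prop)
  exact Continuous.rpow_const (by fun_prop) (fun _ => Or.inr hα.le)

lemma dom_int (α : ℝ) : MeasureTheory.Integrable
    fun y : ℝ => Real.exp (α^2/2) * Real.exp (-(1/2) * y^2) :=
  (integrable_exp_neg_mul_sq (by norm_num)).const_mul _

lemma H_tendsto (α : ℝ) (hα : 0 < α) : Filter.Tendsto
    (fun w : ℝ => ∫ y : ℝ, |1 + y/w|^α * Real.exp (-y^2)) Filter.atTop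
    (nhds (Real.sqrt Real.pi)) := by
  have hg : ∫ y : ℝ, Real.exp (-y^2) = Real.sqrt Real.pi := by
    simpa using integral_gaussian 1
  rw [← hg]
  refine MeasureTheory.tendsto_integral_filter_of_dominated_convergence _ 
    (.of_forall fun w => (meas_H α w hα).aestronglyMeasurable)
    ?_ (dom_int α) ?_
  · filter_upwards [Filter.eventually_ge_atTop 1] with w hw
    exact .of_forall fun y => dom_bound α w y hα hw
  · refine .of_forall fun y => ?_
    have t1 : Filter.Tendsto (fun w : ℝ => |1 + y/w|) Filter.atTop (nhds |1+0|) :=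
      ((Filter.tendsto_id.const_div_atTop y).const_add 1).abs
    have t2 := (t1.rpow_const (p := α) (Or.inr hα.le)).mul_const (Real.exp (-y^2))
    simpa using t2

lemma integral_H (α w : ℝ) (hα : 0 < α) (hw : 1 ≤ w) :
    Real.exp (-w^2) * ∫ v in Set.Ioi (0:ℝ), 2 * (v^α * Real.exp (-v^2) * Real.cosh (2*w*v))
      = w^α * ∫ y : ℝ, |1 + y/w|^α * Real.exp (-y^2) := by
  have hw0 : 0 < w := by linarith
  have hHi : MeasureTheory.Integrable fun y : ℝ => |1 + y/w|^α * Real.exp (-y^2) :=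
    (dom_int α).mono' (meas_H α w hα).aestronglyMeasurable
      (.of_forall fun y => dom_bound α w y hα hw)
  let A : ℝ → ℝ := fun v => |v|^α * Real.exp (-(v-w)^2)
  have hA : (fun y => A (y + w)) = fun y => w^α * (|1 + y/w|^α * Real.exp (-y^2)) := by
    funext y
    simp only [A]
    rw [show y + w = w * (1 + y/w) by field_simp; ring, abs_mul, abs_of_pos hw0,
      Real.mul_rpow hw0.le (abs_nonneg _), show w*(1+y/w) - w = y by field_simp; ring]
    ring
  have hAi' : MeasureTheory.Integrable (fun y => A (y + w)) := by
    rw [hA]; exact hHi.const_mul _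
  have hAi : MeasureTheory.Integrable A := by
    have := hAi'.comp_sub_right w
    simpa using this
  have hAe : ∫ v, A v = w^α * ∫ y : ℝ, |1 + y/w|^α * Real.exp (-y^2) := by
    rw [← MeasureTheory.integral_add_right_eq_self A w, hA, MeasureTheory.integral_const_mul]
  rw [← hAe, MeasureTheory.integral_const_mul]
  have h2 := integral_comp_abs (f := fun v : ℝ => v^α * Real.exp (-v^2) * Real.cosh (2*w*v))
  rw [← h2, ← MeasureTheory.integral_const_mul]
  have e : ∀ v : ℝ, Real.exp (-w^2) * (|v|^α * Real.exp (-|v|^2) * Real.cosh (2*w*|v|))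
      = (A v + A (-v)) / 2 := by
    intro v
    have hc : Real.cosh (2*w*|v|) = Real.cosh (2*w*v) := by
      rw [← Real.cosh_abs (2*w*v), abs_mul, abs_of_pos (by positivity : 0 < 2*w)]
    rw [hc, sq_abs, Real.cosh_eq]
    simp only [A, abs_neg]
    have e1 : Real.exp (-(v-w)^2) = Real.exp (-w^2) * Real.exp (-v^2) * Real.exp (2*w*v) := by
      rw [← Real.exp_add, ← Real.exp_add]; congr 1; ring
    have e2 : Real.exp (-(-v-w)^2) = Real.exp (-w^2) * Real.exp (-v^2) * Real.exp (-(2*w*v)) := by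
      rw [← Real.exp_add, ← Real.exp_add]; congr 1; ring
    rw [e1, e2]; ring
  simp_rw [e]
  rw [MeasureTheory.integral_div, MeasureTheory.integral_add hAi hAi.comp_neg,
    MeasureTheory.integral_neg_eq_self]
  ring

/-- for non-integer `α > 0`, `d > 0`, `x > 0`,
`lim_{t→0⁺} t^{α/2} M(−α/2, 1/2, −x²/(4dt)) = (√π/Γ(α/2+1/2)) · x^α/(2^α d^{α/2})`. -/
theorem statement_12 (α d x : ℝ) (hα : 0 < α) (hαnotint : ∀ n : ℤ, α ≠ n)
    (hd : 0 < d) (hx : 0 < x) :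
    Filter.Tendsto
      (fun t : ℝ => t ^ (α / 2) * kummerM (-α / 2) (1 / 2) (-x ^ 2 / (4 * d * t)))
      (nhdsWithin 0 (Set.Ioi 0))
      (nhds (Real.sqrt Real.pi / Real.Gamma (α / 2 + 1 / 2) *
        (x ^ α / ((2:ℝ) ^ α * d ^ (α / 2))))) := by
  have hG : 0 < Real.Gamma (α/2 + 1/2) := Real.Gamma_pos_of_pos (by linarith)
  have main : ∀ w : ℝ, 1 ≤ w → kummerM (-α/2) (1/2) (-w^2) =
      w^α * (∫ y : ℝ, |1 + y/w|^α * Real.exp (-y^2)) / Real.Gamma (α/2 + 1/2) := by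
    intro w hw
    have hw0 : 0 < w := by linarith
    have k1 := kummer_transform (-α/2) (1/2) (w^2) (fun k h => hαnotint (2*k) (by
      push_cast; linarith)) (fun k => by positivity) (by positivity)
    rw [show 1/2 - -α/2 = (α+1)/2 by ring] at k1
    have k2 := kummer_integral α w hα hw0
    rw [← integral_H α w hα hw, ← k2, ← k1, show α/2+1/2 = (α+1)/2 by ring, Real.exp_neg]
    rw [show α/2+1/2 = (α+1)/2 by ring] at hG
    have := Real.exp_pos (w^2)
    field_simp
  have hwt : Filter.Tendsto (fun t : ℝ => x / (2 * Real.sqrt (d*t))) (nhdsWithin 0 (Set.Ioi 0))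
      Filter.atTop := by
    have hc : Filter.Tendsto (fun t : ℝ => 2 * Real.sqrt (d*t)) (nhdsWithin 0 (Set.Ioi 0))
        (nhdsWithin 0 (Set.Ioi 0)) := by
      refine tendsto_nhdsWithin_iff.mpr ⟨?_, ?_⟩
      · have : Continuous fun t : ℝ => 2 * Real.sqrt (d*t) := by fun_prop
        have := this.tendsto 0
        simp only [mul_zero, Real.sqrt_zero] at this
        exact this.mono_left nhdsWithin_le_nhds
      · filter_upwards [self_mem_nhdsWithin] with t ht
        have ht : 0 < t := ht
        have : 0 < Real.sqrt (d*t) := Real.sqrt_pos.mpr (by positivity)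
        simpa using this
    have := (tendsto_inv_nhdsGT_zero.comp hc).const_mul_atTop hx
    simpa [div_eq_mul_inv, Function.comp_def] using this
  have hlim := (((H_tendsto α hα).comp hwt).div_const (Real.Gamma (α/2+1/2))).mul_const
    (x ^ α / ((2:ℝ) ^ α * d ^ (α / 2)))
  refine hlim.congr' ?_
  filter_upwards [hwt.eventually_ge_atTop 1, self_mem_nhdsWithin] with t hw ht
  have ht : 0 < t := ht
  have hs : 0 < Real.sqrt (d*t) := Real.sqrt_pos.mpr (by positivity)
  have hz : -x^2 / (4*d*t) = -(x / (2 * Real.sqrt (d*t)))^2 := by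
    rw [div_pow, mul_pow, Real.sq_sqrt (by positivity)]; field_simp; norm_num
  rw [hz, main _ hw]
  have hp : (x / (2 * Real.sqrt (d*t)))^α = x^α / (2^α * d^(α/2)) / t^(α/2) := by
    rw [Real.div_rpow hx.le (by positivity), Real.mul_rpow two_pos.le hs.le, Real.sqrt_eq_rpow,
      ← Real.rpow_mul (by positivity), show 1/2*α = α/2 by ring, Real.mul_rpow hd.le ht.le]
    field_simp
  rw [hp]
  have : 0 < t^(α/2) := by positivity
  simp only [Function.comp]
  generalize (∫ y : ℝ, |1 + y / (x / (2 * Real.sqrt (d*t)))| ^ α * Real.exp (-y ^ 2)) = J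
  field_simp
end

section
/- Let α > 0 and let k_l, k_s, d_l, d_s, γ, T_i, T_∞ be positive constants with ω = √(d_l/d_s). Then there exists exactly one x > 0 satisfying the equation (k_l T_∞ / (2^{α+1} d_l^{α/2+1} γ)) f₃(x) − (k_s T_i d_s^{(α−1)/2} / (γ d_l^{(α+1)/2})) f₁(x) = x^{α+1}. -/
lemma poch_pos {a : ℝ} (ha : 0 < a) (s : ℕ) : 0 < poch a s :=
  Finset.prod_pos fun i _ => by positivity

lemma poch_le {a b : ℝ} (ha : 0 < a) (hb : 0 < b) (s : ℕ) :
    poch a s ≤ (1 + a / b) ^ s * poch b s := by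
  unfold poch
  calc _ ≤ ∏ i ∈ Finset.range s, ((1 + a / b) * (b + i)) := by
        apply Finset.prod_le_prod
        · intro i _; positivity
        · intro i _
          have : (1 + a / b) * (b + i) = b + i + a + a / b * i := by field_simp; ring
          rw [this]
          have : 0 ≤ a / b * i := by positivity
          linarith
    _ = _ := by rw [Finset.prod_mul_distrib]; simp

lemma kterm_nonneg {a b z : ℝ} (ha : 0 < a) (hb : 0 < b) (hz : 0 ≤ z) (s : ℕ) :
    0 ≤ poch a s / (poch b s * (Nat.factorial s)) * z ^ s := by
  have := poch_pos ha s
  have := poch_pos hb s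
  positivity

lemma kterm_mono {a b z w : ℝ} (ha : 0 < a) (hb : 0 < b) (hz : 0 ≤ z) (hw : z ≤ w) (s : ℕ) :
    poch a s / (poch b s * (Nat.factorial s)) * z ^ s
      ≤ poch a s / (poch b s * (Nat.factorial s)) * w ^ s := by
  have := poch_pos ha s
  have := poch_pos hb s
  gcongr

lemma kterm_summable {a b z : ℝ} (ha : 0 < a) (hb : 0 < b) (hz : 0 ≤ z) :
    Summable fun s : ℕ => poch a s / (poch b s * (Nat.factorial s)) * z ^ s := by
  refine Summable.of_nonneg_of_le (kterm_nonneg ha hb hz) ?_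
    (Real.summable_pow_div_factorial ((1 + a / b) * z))
  intro s
  have h1 := poch_pos hb s
  have h2 := poch_le ha hb s
  have h3 : poch a s / poch b s ≤ (1 + a / b) ^ s := by rwa [div_le_iff₀ h1]
  calc _ = (poch a s / poch b s) * z ^ s / (Nat.factorial s) := by field_simp
    _ ≤ (1 + a / b) ^ s * z ^ s / (Nat.factorial s) := by gcongr
    _ = _ := by rw [mul_pow]

lemma kummerM_mono {a b z w : ℝ} (ha : 0 < a) (hb : 0 < b) (hz : 0 ≤ z) (hw : z ≤ w) :
    kummerM a b z ≤ kummerM a b w :=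
  (kterm_summable ha hb hz).tsum_le_tsum (kterm_mono ha hb hz hw)
    (kterm_summable ha hb (hz.trans hw))

lemma kummerM_one_le {a b z : ℝ} (ha : 0 < a) (hb : 0 < b) (hz : 0 ≤ z) :
    1 ≤ kummerM a b z := by
  have := (kterm_summable ha hb hz).le_tsum 0 (fun s _ => kterm_nonneg ha hb hz s)
  simpa [poch, kummerM] using this

lemma kummerM_cont {a b R : ℝ} (ha : 0 < a) (hb : 0 < b) (hR : 0 ≤ R) :
    ContinuousOn (kummerM a b) (Set.Icc 0 R) := by
  refine continuousOn_tsum (fun s => by fun_prop) (kterm_summable ha hb hR) ?_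
  intro s z hz
  rw [Real.norm_of_nonneg (kterm_nonneg ha hb hz.1 s)]
  exact kterm_mono ha hb hz.1 hz.2 s

open MeasureTheory Set

lemma g_meas (a : ℝ) (μ : Measure ℝ) : AEStronglyMeasurable
    (fun t : ℝ => t ^ (a - 1) * (1 + t) ^ ((1/2:ℝ) - a - 1)) μ :=
  Measurable.aestronglyMeasurable (by fun_prop)

lemma g_int {a : ℝ} (ha : 0 < a) :
    IntegrableOn (fun t : ℝ => t ^ (a - 1) * (1 + t) ^ ((1/2:ℝ) - a - 1)) (Ioi 0) := by
  rw [← Ioc_union_Ioi_eq_Ioi (zero_le_one (α := ℝ))]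
  apply IntegrableOn.union
  · have h : IntegrableOn (fun t : ℝ => t ^ (a - 1)) (Ioc 0 1) := by
      rw [← intervalIntegrable_iff_integrableOn_Ioc_of_le zero_le_one]
      exact intervalIntegral.intervalIntegrable_rpow' (by linarith)
    refine Integrable.mono' h (g_meas a _) ?_
    filter_upwards [ae_restrict_mem measurableSet_Ioc] with t ht
    have h0 : 0 < t := ht.1
    rw [Real.norm_of_nonneg (by positivity)]
    have : (1 + t) ^ ((1/2:ℝ) - a - 1) ≤ 1 :=
      Real.rpow_le_one_of_one_le_of_nonpos (by linarith) (by linarith)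
    exact mul_le_of_le_one_right (by positivity) this
  · have h := integrableOn_Ioi_rpow_of_lt (a := (-3/2 : ℝ)) (by norm_num) (zero_lt_one)
    refine Integrable.mono' h (g_meas a _) ?_
    filter_upwards [ae_restrict_mem measurableSet_Ioi] with t ht
    have h0 : 0 < t := zero_lt_one.trans ht
    rw [Real.norm_of_nonneg (by positivity)]
    have h1 : (1 + t) ^ ((1/2:ℝ) - a - 1) ≤ t ^ ((1/2:ℝ) - a - 1) :=
      Real.rpow_le_rpow_of_nonpos h0 (by linarith) (by linarith)
    calc _ ≤ t ^ (a - 1) * t ^ ((1/2:ℝ) - a - 1) := by gcongr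
      _ = _ := by rw [← Real.rpow_add h0]; congr 1; ring

lemma u_bound (a : ℝ) {z t : ℝ} (hz : 0 ≤ z) (ht : 0 < t) :
    ‖Real.exp (-z * t) * t ^ (a - 1) * (1 + t) ^ ((1/2:ℝ) - a - 1)‖
      ≤ t ^ (a - 1) * (1 + t) ^ ((1/2:ℝ) - a - 1) := by
  rw [Real.norm_of_nonneg (by positivity), mul_assoc]
  apply mul_le_of_le_one_left (by positivity)
  rw [Real.exp_le_one_iff]
  nlinarith [mul_nonneg hz ht.le]

lemma u_meas (a z : ℝ) (μ : Measure ℝ) : AEStronglyMeasurable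
    (fun t : ℝ => Real.exp (-z * t) * t ^ (a - 1) * (1 + t) ^ ((1/2:ℝ) - a - 1)) μ :=
  Measurable.aestronglyMeasurable (by fun_prop)

lemma u_int {a z : ℝ} (ha : 0 < a) (hz : 0 ≤ z) :
    IntegrableOn (fun t : ℝ => Real.exp (-z * t) * t ^ (a - 1) * (1 + t) ^ ((1/2:ℝ) - a - 1))
      (Ioi 0) := by
  refine Integrable.mono' (g_int ha) (u_meas a z _) ?_
  filter_upwards [ae_restrict_mem measurableSet_Ioi] with t ht
  exact u_bound a hz ht

lemma U_pos {a z : ℝ} (ha : 0 < a) (hz : 0 ≤ z) : 0 < tricomiU a (1/2) z := by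
  unfold tricomiU
  have := Real.Gamma_pos_of_pos ha
  refine mul_pos (by positivity) ?_
  rw [setIntegral_pos_iff_support_of_nonneg_ae _ (u_int ha hz)]
  · have : (Function.support fun t : ℝ => Real.exp (-z * t) * t ^ (a - 1) *
        (1 + t) ^ ((1/2:ℝ) - a - 1)) ∩ Ioi 0 = Ioi 0 := by
      apply inter_eq_right.2
      intro t ht
      have ht : 0 < t := ht
      have : 0 < Real.exp (-z * t) * t ^ (a - 1) * (1 + t) ^ ((1/2:ℝ) - a - 1) := by positivity
      exact this.ne'
    rw [this]; simp
  · filter_upwards [ae_restrict_mem measurableSet_Ioi] with t ht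
    have ht : 0 < t := ht
    simp only [Pi.zero_apply]
    positivity

lemma U_anti {a z w : ℝ} (ha : 0 < a) (hz : 0 ≤ z) (hw : z ≤ w) :
    tricomiU a (1/2) w ≤ tricomiU a (1/2) z := by
  unfold tricomiU
  have := Real.Gamma_pos_of_pos ha
  refine mul_le_mul_of_nonneg_left ?_ (by positivity)
  refine setIntegral_mono_on (u_int ha (hz.trans hw)) (u_int ha hz) measurableSet_Ioi ?_
  intro t ht
  have ht : 0 < t := ht
  gcongr

lemma U_cont {a : ℝ} (ha : 0 < a) : ContinuousOn (tricomiU a (1/2)) (Ici 0) := by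
  unfold tricomiU
  refine continuousOn_const.mul ?_
  refine continuousOn_of_dominated (fun z _ => u_meas a z _) ?_ (g_int ha) ?_
  · intro z hz
    filter_upwards [ae_restrict_mem measurableSet_Ioi] with t ht
    exact u_bound a hz ht
  · filter_upwards with t
    fun_prop

lemma exists_unique_aux {α A B ω : ℝ} (hα : 0 < α) (hA : 0 < A) (hB : 0 < B) :
    ∃! x : ℝ, 0 < x ∧ A * (1 / (x * kummerM (α / 2 + 1) (3 / 2) (x ^ 2)))
      - B * (1 / tricomiU (α / 2 + 1 / 2) (1 / 2) (x ^ 2 * ω ^ 2)) = x ^ (α + 1) := by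
  have ha : 0 < α / 2 + 1 := by positivity
  have hb : (0:ℝ) < 3 / 2 := by norm_num
  have hc : 0 < α / 2 + 1 / 2 := by positivity
  set M : ℝ → ℝ := fun x => kummerM (α / 2 + 1) (3 / 2) (x ^ 2) with hM
  set U : ℝ → ℝ := fun x => tricomiU (α / 2 + 1 / 2) (1 / 2) (x ^ 2 * ω ^ 2) with hU
  have M1 : ∀ x, 1 ≤ M x := fun x => kummerM_one_le ha hb (sq_nonneg x)
  have U0 : ∀ x, 0 < U x := fun x => U_pos hc (by positivity)
  have Mm : ∀ x y, 0 ≤ x → x ≤ y → M x ≤ M y := fun x y hx hxy =>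
    kummerM_mono ha hb (sq_nonneg x) (by gcongr)
  have Um : ∀ x y, 0 ≤ x → x ≤ y → U y ≤ U x := fun x y hx hxy =>
    U_anti hc (by positivity) (by gcongr)
  set H : ℝ → ℝ := fun x => x * M x * (B * (1 / U x) + x ^ (α + 1)) with hH
  have key : ∀ x, 0 < x → (A * (1 / (x * M x)) - B * (1 / U x) = x ^ (α + 1) ↔ H x = A) := by
    intro x hx
    have h1 : 0 < x * M x := mul_pos hx (by linarith [M1 x])
    rw [sub_eq_iff_eq_add, mul_one_div, div_eq_iff h1.ne', eq_comm, hH]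
    constructor <;> intro h <;> simp only at h ⊢ <;> rw [← h] <;> ring
  have Hmono : ∀ x y, 0 < x → x < y → H x < H y := by
    intro x y hx hxy
    have h1 := M1 x
    have h2 := U0 x
    have h3 := U0 y
    have h4 := Mm x y hx.le hxy.le
    have h5 := Um x y hx.le hxy.le
    have h6 : x * M x < y * M y :=
      mul_lt_mul hxy h4 (by linarith) (by linarith)
    have h7 : B * (1 / U x) + x ^ (α + 1) ≤ B * (1 / U y) + y ^ (α + 1) := by gcongr
    have h8 : 0 < B * (1 / U x) + x ^ (α + 1) := by positivity
    have h9 : 0 ≤ x * M x := mul_nonneg hx.le (by linarith)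
    exact mul_lt_mul h6 h7 h8 (by linarith)
  have hex : ∃ x, 0 < x ∧ H x = A := by
    set X := max 1 A with hX
    have hX1 : 1 ≤ X := le_max_left _ _
    have hX0 : 0 ≤ X := by linarith
    have Mc : ContinuousOn M (Icc 0 X) := by
      refine (kummerM_cont ha hb (sq_nonneg X)).comp (by fun_prop) ?_
      intro x hx
      exact ⟨sq_nonneg x, pow_le_pow_left₀ hx.1 hx.2 2⟩
    have Uc : ContinuousOn U (Icc 0 X) := by
      refine (U_cont hc).comp (by fun_prop) ?_
      intro x hx
      exact mem_Ici.2 (by positivity)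
    have Hc : ContinuousOn H (Icc 0 X) := by
      refine (continuousOn_id.mul Mc).mul ((continuousOn_const.mul
        (continuousOn_const.div Uc (fun x _ => (U0 x).ne'))).add ?_)
      exact continuousOn_id.rpow_const (fun x _ => Or.inr (by linarith))
    have H0 : H 0 = 0 := by simp [hH]
    have HX : A ≤ H X := by
      have h2 := U0 X
      have h3 : X ≤ X * M X := le_mul_of_one_le_right hX0 (M1 X)
      have h4 : 1 ≤ X ^ (α + 1) := Real.one_le_rpow hX1 (by linarith)
      have h5 : 0 ≤ B * (1 / U X) := by positivity
      calc A ≤ X := le_max_right _ _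
        _ ≤ X * M X := h3
        _ ≤ H X := le_mul_of_one_le_right (by linarith) (by linarith)
    obtain ⟨x, hx, hxA⟩ := intermediate_value_Icc hX0 Hc ⟨by rw [H0]; exact hA.le, HX⟩
    refine ⟨x, lt_of_le_of_ne hx.1 ?_, hxA⟩
    rintro rfl
    rw [H0] at hxA
    exact hA.ne hxA
  obtain ⟨x, hx, hxA⟩ := hex
  refine ⟨x, ⟨hx, (key x hx).2 hxA⟩, ?_⟩
  rintro y ⟨hy, hyA⟩
  have hyA := (key y hy).1 hyA
  rcases lt_trichotomy y x with h | h | h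
  · have := Hmono y x hy h; linarith
  · exact h
  · have := Hmono x y hx h; linarith

/-- the equation
`(k_l T_∞/(2^{α+1} d_l^{α/2+1} γ)) f₃(x) − (k_s T_i d_s^{(α−1)/2}/(γ d_l^{(α+1)/2})) f₁(x) = x^{α+1}`
has exactly one positive solution. -/
theorem statement_15 (α kl ks dl ds γ Ti Tinf : ℝ)
    (hα : 0 < α) (hkl : 0 < kl) (hks : 0 < ks) (hdl : 0 < dl) (hds : 0 < ds)
    (hγ : 0 < γ) (hTi : 0 < Ti) (hTinf : 0 < Tinf)
    (ω : ℝ) (hω : ω = Real.sqrt (dl / ds)) :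
    ∃! x : ℝ, 0 < x ∧
      kl * Tinf / ((2:ℝ) ^ (α + 1) * dl ^ (α / 2 + 1) * γ) *
          (1 / (x * kummerM (α / 2 + 1) (3 / 2) (x ^ 2)))
        - ks * Ti * ds ^ ((α - 1) / 2) / (γ * dl ^ ((α + 1) / 2)) *
          (1 / tricomiU (α / 2 + 1 / 2) (1 / 2) (x ^ 2 * ω ^ 2))
        = x ^ (α + 1) := by
  exact exists_unique_aux hα (by positivity) (by positivity)
end
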